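/- Define the Markov chain V̄_{n+1} = (1−β)(V̄_n^{1−k} + α(1−k)Ḡ_{V̄_n})^{1/(1−k)} on [0,∞), where 0 < β < 1, k = 3/4, α > 0, and conditionally on V̄_n = x, Ḡ_x has the complementary CDF exp(−xy − 2α(1−k)x^k y² − 2α²(1−k)² x^{2k−1} y³ − α³(1−k)³ x^{3k−2} y⁴ − α⁴(1−k)⁴ x^{4k−3} y⁵/5). Then for every n and every starting state, V̄_n^{1−k} is stochastically dominated by X_n, where X_{n+1} = (1−β)^{1−k}(X_n + α(1−k)η_n) with η_n i.i.d. distributed as Ḡ_0 and X₀ = V̄₀^{1−k}. Consequently the family of Cesàro averages (1/n)Σ_{i=1}^n P_x(V̄_i ∈ ·) is tight, and {V̄_n} admits an invariant probability distribution. -/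

import Mathlib

open Real MeasureTheory Set

/-!
The window started at `x` equals `(x ^ r + c t) ^ (1 / r)` at time `t`, with `r = 1 - k` and
`c = α r`, and this is the hazard rate of a loss. Integrating and inverting the hazard makes `Ḡ_x`
an explicit function of `x` and a standard exponential variable; by subadditivity of
`z ↦ z ^ (1 / p)`, where `p = 1 / r + 1`, it is at most its value at `x = 0`. Drive both chains by
the same exponential noise: `V̄ ^ r` then stays below the affine recursion, whose mean is bounded
since it contracts. Markov's inequality gives tightness, and as one step of the chain is continuous
in the state, the Krylov–Bogolyubov theorem gives an invariant law.
-/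

open ProbabilityTheory Filter Topology BoundedContinuousFunction
open scoped NNReal ENNReal

section StochasticOrder

variable {Ω E : Type*} [MeasurableSpace Ω] [MeasurableSpace E] [Preorder E]

/-- The usual stochastic order `μ ≤_st ν` on measures. It compares the masses of all measurable
upper sets, which in a linear order includes the tails `Ioi t` and `Ici t`. -/
def StochLE (μ ν : Measure E) : Prop :=
  ∀ s, MeasurableSet s → IsUpperSet s → μ s ≤ ν s

lemma StochLE.rfl {μ : Measure E} : StochLE μ μ := fun _ _ _ ↦ le_rfl

lemma StochLE.trans {μ ν ρ : Measure E} (h₁ : StochLE μ ν) (h₂ : StochLE ν ρ) : StochLE μ ρ :=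
  fun s hs hs' ↦ (h₁ s hs hs').trans (h₂ s hs hs')

lemma stochLE_map_of_le {P : Measure Ω} {f g : Ω → E} (hf : Measurable f) (hg : Measurable g)
    (hfg : f ≤ g) : StochLE (P.map f) (P.map g) := by
  intro s hs hs'
  rw [Measure.map_apply hf hs, Measure.map_apply hg hs]
  exact measure_mono fun ω hω ↦ hs' (hfg ω) hω

end StochasticOrder

section RandomMap

variable {E F G : Type*} [MeasurableSpace E] [MeasurableSpace F] [MeasurableSpace G]
  {Q : Measure F}

/-- The transition kernel `x ↦ law of h (x, ξ)` of a random map, where the noise `ξ` has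
law `Q`. -/
noncomputable def randomMapKernel (Q : Measure F) (h : E × F → G) : Kernel E G :=
  (Kernel.id ×ₖ Kernel.const E Q).map h

lemma randomMapKernel_apply [SFinite Q] {h : E × F → G} (hh : Measurable h) (x : E) :
    randomMapKernel Q h x = Q.map fun e ↦ h (x, e) := by
  rw [randomMapKernel, Kernel.map_apply _ hh, Kernel.prod_apply, Kernel.id_apply,
    Kernel.const_apply, Measure.dirac_prod, Measure.map_map hh (by fun_prop)]
  rfl

lemma isMarkovKernel_randomMapKernel [IsProbabilityMeasure Q] {h : E × F → G}
    (hh : Measurable h) : IsMarkovKernel (randomMapKernel Q h) :=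
  Kernel.IsMarkovKernel.map _ hh

lemma comp_randomMapKernel [SFinite Q] {h : E × F → G} (hh : Measurable h) (μ : Measure E)
    [SFinite μ] : randomMapKernel Q h ∘ₘ μ = (μ.prod Q).map h := by
  rw [randomMapKernel, ← Measure.map_comp _ _ hh, ← Measure.compProd_eq_comp_prod,
    Measure.compProd_const]

lemma lintegral_randomMapKernel [SFinite Q] {h : E × F → G} (hh : Measurable h) {f : G → ℝ≥0∞}
    (hf : Measurable f) (x : E) :
    ∫⁻ y, f y ∂randomMapKernel Q h x = ∫⁻ e, f (h (x, e)) ∂Q := by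
  rw [randomMapKernel_apply hh, lintegral_map hf (by fun_prop)]

lemma StochLE.comp_randomMapKernel [SFinite Q] [Preorder E] [Preorder G] {h : E × F → G}
    (hh : Measurable h) (hmono : ∀ e, Monotone fun x ↦ h (x, e)) {μ ν : Measure E} [SFinite μ]
    [SFinite ν] (hμν : StochLE μ ν) :
    StochLE (randomMapKernel Q h ∘ₘ μ) (randomMapKernel Q h ∘ₘ ν) := by
  intro s hs hs'
  rw [_root_.comp_randomMapKernel hh, _root_.comp_randomMapKernel hh, Measure.map_apply hh hs,
    Measure.map_apply hh hs, Measure.prod_apply_symm (hh hs), Measure.prod_apply_symm (hh hs)]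
  exact lintegral_mono fun e ↦ hμν _ (measurable_prodMk_right (hh hs)) (hs'.preimage (hmono e))

/-- Driving both chains by the same noise, `φ` of the first stays below the second. -/
lemma StochLE.iterate_comp_randomMapKernel [IsProbabilityMeasure Q] [Preorder G] {φ : E → G}
    {h : E × F → E} {g : G × F → G} (hφ : Measurable φ) (hh : Measurable h) (hg : Measurable g)
    (hφh : ∀ x e, φ (h (x, e)) ≤ g (φ x, e)) (hmono : ∀ e, Monotone fun x ↦ g (x, e))
    {μ : Measure E} {ν : Measure G} [IsProbabilityMeasure μ] [IsProbabilityMeasure ν]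
    (hμν : StochLE (μ.map φ) ν) (n : ℕ) :
    StochLE (((randomMapKernel Q h ∘ₘ ·)^[n] μ).map φ) ((randomMapKernel Q g ∘ₘ ·)^[n] ν) := by
  have := isMarkovKernel_randomMapKernel (Q := Q) hh
  have := isMarkovKernel_randomMapKernel (Q := Q) hg
  induction n generalizing μ ν with
  | zero => exact hμν
  | succ _ ih =>
    refine ih (StochLE.trans ?_ (hμν.comp_randomMapKernel hg hmono))
    have hle : StochLE ((μ.prod Q).map (φ ∘ h)) ((μ.prod Q).map (g ∘ Prod.map φ id)) :=
      stochLE_map_of_le (by fun_prop) (by fun_prop) fun p ↦ hφh p.1 p.2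
    have hμQ : (μ.map φ).prod Q = (μ.prod Q).map (Prod.map φ id) := by
      rw [← Measure.map_prod_map μ Q hφ measurable_id, Measure.map_id]
    beta_reduce
    rwa [_root_.comp_randomMapKernel hh, _root_.comp_randomMapKernel hg, Measure.map_map hφ hh,
      hμQ, Measure.map_map hg (by fun_prop)]

end RandomMap

section Iterates

variable {E G : Type*} [MeasurableSpace E] [MeasurableSpace G] {K : Kernel E E}

lemma isProbabilityMeasure_iterate_comp [IsMarkovKernel K] (μ : Measure E)
    [IsProbabilityMeasure μ] (n : ℕ) : IsProbabilityMeasure ((K ∘ₘ ·)^[n] μ) := by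
  induction n generalizing μ with
  | zero => assumption
  | succ _ ih => exact ih (K ∘ₘ μ)

/-- The geometric drift condition `K f ≤ a f + b` bounds the mean of `f` along the chain. -/
lemma lintegral_iterate_comp_le [IsMarkovKernel K] {f : E → ℝ≥0∞} (hf : Measurable f)
    {a b : ℝ≥0∞} (ha : a < 1) (hK : ∀ x, ∫⁻ y, f y ∂K x ≤ a * f x + b) (μ : Measure E)
    [IsProbabilityMeasure μ] (n : ℕ) :
    ∫⁻ x, f x ∂(K ∘ₘ ·)^[n] μ ≤ ∫⁻ x, f x ∂μ + b * (1 - a)⁻¹ := by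
  have hgeom : 1 + a * (1 - a)⁻¹ = (1 - a)⁻¹ := by
    nth_rw 1 [← ENNReal.mul_inv_cancel (tsub_pos_of_lt ha).ne' (by finiteness), ← add_mul,
      tsub_add_cancel_of_le ha.le, one_mul]
  induction n with
  | zero => exact le_self_add
  | succ n ih =>
    have := isProbabilityMeasure_iterate_comp (K := K) μ n
    rw [Function.iterate_succ_apply',
      Measure.lintegral_bind K.measurable.aemeasurable hf.aemeasurable]
    calc ∫⁻ x, ∫⁻ y, f y ∂K x ∂(K ∘ₘ ·)^[n] μ
        ≤ ∫⁻ x, (a * f x + b) ∂(K ∘ₘ ·)^[n] μ := lintegral_mono hK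
      _ = a * ∫⁻ x, f x ∂(K ∘ₘ ·)^[n] μ + b := by
          rw [lintegral_add_right _ measurable_const, lintegral_const_mul _ hf, lintegral_const,
            measure_univ, mul_one]
      _ ≤ a * (∫⁻ x, f x ∂μ + b * (1 - a)⁻¹) + b := by gcongr
      _ = a * ∫⁻ x, f x ∂μ + b * (1 + a * (1 - a)⁻¹) := by ring
      _ ≤ ∫⁻ x, f x ∂μ + b * (1 - a)⁻¹ := by
          rw [hgeom]; gcongr; exact mul_le_of_le_one_left' ha.le

lemma semiconj_map_bind {φ : E → G} (hφ : MeasurableEmbedding φ) {κ : G → Measure G}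
    (hκ : ∀ x, κ (φ x) = (K x).map φ) :
    Function.Semiconj (Measure.map φ) (K ∘ₘ ·) (Measure.bind · κ) := by
  intro μ
  have hK : κ ∘ φ = K.map φ := by ext x : 1; rw [Kernel.map_apply _ hφ.measurable]; exact hκ x
  have hκφ : AEMeasurable κ (μ.map φ) := by
    rw [hφ.aemeasurable_map_iff, hK]
    exact (K.map φ).measurable.aemeasurable
  ext s hs
  rw [Measure.map_comp _ _ hφ.measurable, Measure.bind_apply hs (K.map φ).measurable.aemeasurable,
    Measure.bind_apply hs hκφ, hφ.lintegral_map, ← hK]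
  rfl

lemma eq_map_iterate_comp_dirac {φ : E → G} (hφ : MeasurableEmbedding φ) {κ : G → Measure G}
    (hκ : ∀ x, κ (φ x) = (K x).map φ) {μ : ℕ → Measure G} {x : E}
    (h₀ : μ 0 = Measure.dirac (φ x)) (hsucc : ∀ n, μ (n + 1) = (μ n).bind κ) (n : ℕ) :
    μ n = ((K ∘ₘ ·)^[n] (Measure.dirac x)).map φ := by
  induction n with
  | zero => rw [h₀, Function.iterate_zero, id, Measure.map_dirac' hφ.measurable]
  | succ n ih =>
    rw [hsucc, ih, Function.iterate_succ_apply']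
    exact (semiconj_map_bind hφ hκ _).symm

lemma map_bind_eq_self {φ : E → G} (hφ : MeasurableEmbedding φ) {κ : G → Measure G}
    (hκ : ∀ x, κ (φ x) = (K x).map φ) {ρ : Measure E} (hρ : K.Invariant ρ) :
    (ρ.map φ).bind κ = ρ.map φ :=
  (semiconj_map_bind hφ hκ ρ).symm.trans (congrArg (Measure.map φ) hρ)

lemma birkhoffAverage_measure_apply_le {T : Measure E → Measure E} {μ : Measure E} {s : Set E}
    {ε : ℝ≥0∞} (h : ∀ n, (T^[n] μ) s ≤ ε) (n : ℕ) : birkhoffAverage ℝ≥0 T id n μ s ≤ ε := by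
  have hsum : ∑ k ∈ Finset.range n, (T^[k] μ) s ≤ n * ε := by
    simpa using Finset.sum_le_card_nsmul (Finset.range n) _ ε fun k _ ↦ h k
  rcases eq_or_ne n 0 with rfl | hn
  · simp
  · simp only [birkhoffAverage, birkhoffSum, id, Measure.smul_apply, Measure.finsetSum_apply,
      ENNReal.smul_def, smul_eq_mul]
    rw [ENNReal.coe_inv (by simpa), ENNReal.coe_natCast,
      ENNReal.inv_mul_le_iff (by simpa) (by finiteness)]
    exact hsum

lemma isProbabilityMeasure_birkhoffAverage [IsMarkovKernel K] (μ : Measure E)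
    [IsProbabilityMeasure μ] {n : ℕ} (hn : n ≠ 0) :
    IsProbabilityMeasure (birkhoffAverage ℝ≥0 (K ∘ₘ ·) id n μ) := by
  have := isProbabilityMeasure_iterate_comp (K := K) μ
  constructor
  simp [birkhoffAverage, birkhoffSum, ENNReal.smul_def, hn, ENNReal.inv_mul_cancel]

lemma integral_birkhoffAverage [IsMarkovKernel K] (μ : Measure E) [IsProbabilityMeasure μ]
    {f : E → ℝ} (hf : Measurable f) {C : ℝ} (hC : ∀ x, ‖f x‖ ≤ C) (n : ℕ) :
    ∫ x, f x ∂birkhoffAverage ℝ≥0 (K ∘ₘ ·) id n μ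
      = birkhoffAverage ℝ (K ∘ₘ ·) (fun ρ ↦ ∫ x, f x ∂ρ) n μ := by
  have := isProbabilityMeasure_iterate_comp (K := K) μ
  simp only [birkhoffAverage, birkhoffSum, id]
  rw [integral_smul_nnreal_measure, integral_finsetSum_measure fun k _ ↦
    .of_bound hf.aestronglyMeasurable C (.of_forall hC)]
  simp [NNReal.smul_def]

lemma integral_comp_measure {f : E → ℝ} {μ : Measure E} (hf : Integrable f (K ∘ₘ μ)) :
    ∫ y, f y ∂(K ∘ₘ μ) = ∫ x, ∫ y, f y ∂K x ∂μ := by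
  rw [Measure.comp_eq_comp_const_apply] at hf ⊢
  rw [Kernel.integral_comp hf, Kernel.const_apply]

lemma tendsto_integral_birkhoffAverage_comp_sub [IsMarkovKernel K] (μ : Measure E)
    [IsProbabilityMeasure μ] {f : E → ℝ} (hf : Measurable f) {C : ℝ} (hC : ∀ x, ‖f x‖ ≤ C) :
    Tendsto (fun n ↦ ∫ x, ∫ y, f y ∂K x ∂birkhoffAverage ℝ≥0 (K ∘ₘ ·) id n μ
      - ∫ x, f x ∂birkhoffAverage ℝ≥0 (K ∘ₘ ·) id n μ) atTop (𝓝 0) := by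
  have := isProbabilityMeasure_iterate_comp (K := K) μ
  have hbound (ρ : Measure E) [IsProbabilityMeasure ρ] : ‖∫ x, f x ∂ρ‖ ≤ C := by
    simpa using norm_integral_le_of_norm_le_const (μ := ρ) (.of_forall hC)
  have hshift (n : ℕ) : ∫ x, ∫ y, f y ∂K x ∂birkhoffAverage ℝ≥0 (K ∘ₘ ·) id n μ
      = birkhoffAverage ℝ (K ∘ₘ ·) (fun ρ ↦ ∫ x, f x ∂ρ) n (K ∘ₘ μ) := by
    rw [integral_birkhoffAverage μ hf.stronglyMeasurable.integral_kernel.measurable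
      fun x ↦ hbound (K x)]
    simp only [birkhoffAverage, birkhoffSum, ← Function.iterate_succ_apply,
      Function.iterate_succ_apply', integral_comp_measure (.of_bound hf.aestronglyMeasurable C
        (.of_forall hC))]
  simp only [hshift, integral_birkhoffAverage μ hf hC]
  refine tendsto_birkhoffAverage_apply_sub_birkhoffAverage ℝ
    (isBounded_iff_forall_norm_le.2 ⟨C, ?_⟩)
  rintro _ ⟨n, rfl⟩
  exact hbound _

end Iterates

section KrylovBogolyubov

variable {E F : Type*} [MeasurableSpace E] [TopologicalSpace E]

/-- A kernel is (weakly) Feller if it maps bounded continuous functions to continuous functions;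
boundedness of the image is automatic for Markov kernels. -/
def IsFeller (K : Kernel E E) : Prop :=
  ∀ f : E →ᵇ ℝ, Continuous fun x ↦ ∫ y, f y ∂K x

lemma isFeller_randomMapKernel [MeasurableSpace F] {Q : Measure F} [IsProbabilityMeasure Q]
    [OpensMeasurableSpace E] [FirstCountableTopology E] {h : E × F → E} (hh : Measurable h)
    (hcont : ∀ e, Continuous fun x ↦ h (x, e)) : IsFeller (randomMapKernel Q h) := by
  intro f
  have hint (x : E) : ∫ y, f y ∂randomMapKernel Q h x = ∫ e, f (h (x, e)) ∂Q := by
    rw [randomMapKernel_apply hh]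
    exact integral_map (by fun_prop) f.continuous.measurable.aestronglyMeasurable
  simp only [hint]
  refine continuous_of_dominated (bound := fun _ ↦ ‖f‖) (fun x ↦ ?_)
    (fun x ↦ .of_forall fun e ↦ f.norm_coe_le_norm _) (integrable_const _)
    (.of_forall fun e ↦ f.continuous.comp (hcont e))
  exact (f.continuous.measurable.comp (by fun_prop : Measurable fun e ↦ h (x, e)))
    |>.aestronglyMeasurable

/-- The **Krylov–Bogolyubov theorem**. -/
theorem IsFeller.exists_invariant [T2Space E] [BorelSpace E] [HasOuterApproxClosed E]
    {K : Kernel E E} [IsMarkovKernel K] (hK : IsFeller K) (μ : Measure E) [IsProbabilityMeasure μ]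
    (hμ : IsTightMeasureSet (range fun n ↦ birkhoffAverage ℝ≥0 (K ∘ₘ ·) id n μ)) :
    ∃ ρ : Measure E, IsProbabilityMeasure ρ ∧ K.Invariant ρ := by
  let A (n : ℕ) : ProbabilityMeasure E :=
    ⟨birkhoffAverage ℝ≥0 (K ∘ₘ ·) id (n + 1) μ,
      isProbabilityMeasure_birkhoffAverage μ n.succ_ne_zero⟩
  obtain ⟨ρ, hρ⟩ : ∃ ρ, Tendsto A (hyperfilter ℕ) (𝓝 ρ) := by
    have hcompact : IsCompact (closure (range A)) :=
      isCompact_closure_of_isTightMeasureSet (hμ.subset fun _ ⟨_, ⟨n, hn⟩, hm⟩ ↦ ⟨n + 1, by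
        rw [← hm, ← hn]; rfl⟩)
    obtain ⟨ρ, -, hρ⟩ := hcompact.ultrafilter_le_nhds' ((hyperfilter ℕ).map A)
      (mem_of_superset (mem_map.2 (univ_mem' mem_range_self)) subset_closure)
    exact ⟨ρ, hρ⟩
  refine ⟨ρ, inferInstance, ext_of_forall_integral_eq_of_IsFiniteMeasure fun f ↦ ?_⟩
  let Kf : E →ᵇ ℝ := .ofNormedAddCommGroup (fun x ↦ ∫ y, f y ∂K x) (hK f) ‖f‖ fun x ↦ by
    simpa using norm_integral_le_of_norm_le_const (μ := K x) (.of_forall f.norm_coe_le_norm)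
  rw [integral_comp_measure (f.integrable _)]
  have hlim := ProbabilityMeasure.tendsto_iff_forall_integral_tendsto.1 hρ
  have hzero := (tendsto_integral_birkhoffAverage_comp_sub (K := K) μ f.continuous.measurable
    f.norm_coe_le_norm).comp ((tendsto_add_atTop_nat 1).mono_left Nat.hyperfilter_le_atTop)
  exact sub_eq_zero.1 (tendsto_nhds_unique ((hlim Kf).sub (hlim f)) hzero)

end KrylovBogolyubov

section WindowChain

variable {F : Type*} {r : ℝ} {a c δ : ℝ≥0} {η : F → ℝ≥0} {τ : ℝ≥0 × F → ℝ≥0}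

/-- One step of the post-loss window chain: from the window `p.1`, the `r`-th power of the window
grows linearly, at rate `c`, until the loss time `τ p`, when the window shrinks by the
factor `δ`. -/
noncomputable def windowStep (δ c : ℝ≥0) (r : ℝ) (τ : ℝ≥0 × F → ℝ≥0) (p : ℝ≥0 × F) : ℝ≥0 :=
  δ * (p.1 ^ r + c * τ p) ^ r⁻¹

/-- One step of the affine recursion `X ↦ a (X + c η)`. -/
noncomputable def affineStep (a c : ℝ≥0) (η : F → ℝ≥0) (p : ℝ≥0 × F) : ℝ≥0 :=
  a * (p.1 + c * η p.2)

lemma continuous_windowStep (hr : 0 < r) {e : F} (hτ : Continuous fun x ↦ τ (x, e)) :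
    Continuous fun x ↦ windowStep δ c r τ (x, e) := by
  have hbase : Continuous fun x ↦ x ^ r + c * τ (x, e) :=
    (NNReal.continuous_rpow_const hr.le).add (hτ.const_mul c)
  exact ((NNReal.continuous_rpow_const (inv_nonneg.2 hr.le)).comp hbase).const_mul δ

lemma windowStep_rpow (hr : r ≠ 0) (p : ℝ≥0 × F) :
    windowStep δ c r τ p ^ r = δ ^ r * (p.1 ^ r + c * τ p) := by
  rw [windowStep, NNReal.mul_rpow, NNReal.rpow_inv_rpow hr]

variable [MeasurableSpace F] {Q : Measure F}

lemma measurable_windowStep (hτ : Measurable τ) : Measurable (windowStep δ c r τ) := by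
  unfold windowStep; fun_prop

lemma measurable_affineStep (hη : Measurable η) : Measurable (affineStep a c η) := by
  unfold affineStep; fun_prop

lemma stochLE_iterate_windowStep [IsProbabilityMeasure Q] (hr : r ≠ 0) (hτ : Measurable τ)
    (hη : Measurable η) (hτη : ∀ x e, τ (x, e) ≤ η e) (v : ℝ≥0) (n : ℕ) :
    StochLE (((randomMapKernel Q (windowStep δ c r τ) ∘ₘ ·)^[n] (.dirac v)).map (· ^ r))
      ((randomMapKernel Q (affineStep (δ ^ r) c η) ∘ₘ ·)^[n] (.dirac (v ^ r))) := by
  refine StochLE.iterate_comp_randomMapKernel (by fun_prop) (measurable_windowStep hτ)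
    (measurable_affineStep hη) (fun x e ↦ ?_) (fun e x y hxy ↦ ?_) ?_ n
  · rw [windowStep_rpow hr, affineStep]
    gcongr
    exact hτη x e
  · simp only [affineStep]
    gcongr
  · rw [Measure.map_dirac' (by fun_prop)]
    exact .rfl

lemma exists_forall_measure_Ioi_le {ι : Type*} {μ : ι → Measure ℝ≥0} {B : ℝ≥0∞} (hB : B ≠ ∞)
    (hμ : ∀ i, ∫⁻ y, y ∂μ i ≤ B) {ε : ℝ≥0∞} (hε : ε ≠ 0) :
    ∃ M : ℝ≥0, ∀ i, μ i (Ioi M) ≤ ε := by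
  obtain ⟨M, hM⟩ := ENNReal.lt_iff_exists_coe.1 (ENNReal.div_ne_top hB hε).lt_top
  refine ⟨M + 1, fun i ↦ ?_⟩
  have hM₀ : ((M + 1 : ℝ≥0) : ℝ≥0∞) ≠ 0 := by simp
  calc μ i (Ioi (M + 1)) ≤ μ i {y | ((M + 1 : ℝ≥0) : ℝ≥0∞) ≤ y} :=
        measure_mono fun y hy ↦ ENNReal.coe_le_coe.2 (le_of_lt hy)
    _ ≤ (∫⁻ y, y ∂μ i) / (M + 1 : ℝ≥0) :=
        meas_ge_le_lintegral_div (by fun_prop) hM₀ ENNReal.coe_ne_top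
    _ ≤ B / (M + 1 : ℝ≥0) := by gcongr; exact hμ i
    _ ≤ ε := by
        rw [ENNReal.div_le_iff_le_mul (.inl hM₀) (.inl ENNReal.coe_ne_top), mul_comm,
          ← ENNReal.div_le_iff_le_mul (.inl hε) (.inr hM₀), hM.1]
        exact ENNReal.coe_le_coe.2 le_self_add

lemma exists_iterate_affineStep_Ioi_le [IsProbabilityMeasure Q] (ha : a < 1) (hη : Measurable η)
    (hmean : ∫⁻ e, η e ∂Q ≠ ∞) (x : ℝ≥0) {ε : ℝ≥0∞} (hε : ε ≠ 0) :
    ∃ M : ℝ≥0, ∀ n, ((randomMapKernel Q (affineStep a c η) ∘ₘ ·)^[n] (.dirac x)) (Ioi M) ≤ ε := by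
  have ha' : (a : ℝ≥0∞) < 1 := mod_cast ha
  have hmeas : Measurable (affineStep a c η) := measurable_affineStep hη
  have := isMarkovKernel_randomMapKernel (Q := Q) hmeas
  have hdrift (y : ℝ≥0) : ∫⁻ z, z ∂randomMapKernel Q (affineStep a c η) y
      ≤ a * y + a * (c * ∫⁻ e, η e ∂Q) := by
    rw [lintegral_randomMapKernel hmeas measurable_coe_nnreal_ennreal]
    simp only [affineStep, ENNReal.coe_mul, ENNReal.coe_add]
    rw [lintegral_const_mul _ (by fun_prop), lintegral_add_left measurable_const,
      lintegral_const_mul _ (by fun_prop), lintegral_const, measure_univ, mul_one, mul_add]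
  refine exists_forall_measure_Ioi_le ?_
    (lintegral_iterate_comp_le measurable_coe_nnreal_ennreal ha' hdrift (.dirac x)) hε
  have : (1 - a : ℝ≥0∞) ≠ 0 := (tsub_pos_of_lt ha').ne'
  rw [lintegral_dirac]
  finiteness

lemma exists_iterate_windowStep_Ioi_le [IsProbabilityMeasure Q] (hr : 0 < r) (hδ : δ < 1)
    (hτ : Measurable τ) (hη : Measurable η) (hτη : ∀ x e, τ (x, e) ≤ η e)
    (hmean : ∫⁻ e, η e ∂Q ≠ ∞) (v : ℝ≥0) {ε : ℝ≥0∞} (hε : ε ≠ 0) :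
    ∃ M : ℝ≥0, ∀ n, ((randomMapKernel Q (windowStep δ c r τ) ∘ₘ ·)^[n] (.dirac v)) (Ioi M) ≤ ε := by
  obtain ⟨M, hM⟩ := exists_iterate_affineStep_Ioi_le (c := c) (NNReal.rpow_lt_one hδ hr) hη hmean
    (v ^ r) hε
  refine ⟨M ^ r⁻¹, fun n ↦ ?_⟩
  have hdom := stochLE_iterate_windowStep (δ := δ) (c := c) (Q := Q) hr.ne' hτ hη hτη v n (Ioi M)
    measurableSet_Ioi (isUpperSet_Ioi M)
  rw [Measure.map_apply (by fun_prop) measurableSet_Ioi] at hdom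
  have hpre : (· ^ r) ⁻¹' Ioi M = Ioi (M ^ r⁻¹) := by
    ext w; simp [NNReal.rpow_inv_lt_iff hr]
  exact hpre ▸ hdom.trans (hM n)

theorem exists_invariant_windowStep [IsProbabilityMeasure Q] (hr : 0 < r) (hδ : δ < 1)
    (hτ : Measurable τ) (hτcont : ∀ e, Continuous fun x ↦ τ (x, e)) (hη : Measurable η)
    (hτη : ∀ x e, τ (x, e) ≤ η e) (hmean : ∫⁻ e, η e ∂Q ≠ ∞) :
    ∃ ρ : Measure ℝ≥0, IsProbabilityMeasure ρ ∧
      (randomMapKernel Q (windowStep δ c r τ)).Invariant ρ := by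
  have hmeas : Measurable (windowStep δ c r τ) := measurable_windowStep hτ
  have := isMarkovKernel_randomMapKernel (Q := Q) hmeas
  refine (isFeller_randomMapKernel hmeas fun e ↦ continuous_windowStep hr (hτcont e))
    |>.exists_invariant (.dirac 0) ?_
  rw [isTightMeasureSet_iff_exists_isCompact_measure_compl_le]
  intro ε hε
  obtain ⟨M, hM⟩ := exists_iterate_windowStep_Ioi_le (c := c) hr hδ hτ hη hτη hmean 0 hε.ne'
  refine ⟨Iic M, Icc_bot (a := M) ▸ isCompact_Icc, forall_mem_range.2 fun n ↦ ?_⟩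
  rw [compl_Iic]
  exact birkhoffAverage_measure_apply_le hM n

end WindowChain

section ExponentialNoise

lemma expMeasure_real_Ici {r : ℝ} (hr : 0 < r) {y : ℝ} (hy : 0 ≤ y) :
    (expMeasure r).real (Ici y) = exp (-(r * y)) := by
  have := isProbabilityMeasure_expMeasure hr
  have : NullSingletonClass (expMeasure r) := by
    unfold expMeasure gammaMeasure; infer_instance
  have hcdf := cdf_expMeasure_eq hr y
  rw [cdf_eq_real, if_pos hy] at hcdf
  rw [← measureReal_congr Ioi_ae_eq_Ici, ← compl_Iic, probReal_compl_eq_one_sub measurableSet_Iic,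
    hcdf, sub_sub_cancel]

/-- The exponential distribution with rate one, as a measure on `ℝ≥0`. It is the common noise
that drives both chains. -/
noncomputable def unitExpNoise : Measure ℝ≥0 :=
  (expMeasure 1).comap (↑)

lemma measurableEmbedding_coe_nnreal_real : MeasurableEmbedding ((↑) : ℝ≥0 → ℝ) :=
  .subtype_coe measurableSet_Ici

lemma unitExpNoise_real_Ici (y : ℝ≥0) : unitExpNoise.real (Ici y) = exp (-y) := by
  rw [measureReal_def, unitExpNoise, measurableEmbedding_coe_nnreal_real.comap_apply,
    NNReal.image_coe_Ici, ← measureReal_def, expMeasure_real_Ici one_pos y.coe_nonneg, one_mul]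

instance : IsProbabilityMeasure unitExpNoise := by
  have h := unitExpNoise_real_Ici 0
  rw [← bot_eq_zero, Ici_bot, bot_eq_zero, NNReal.coe_zero, neg_zero, exp_zero] at h
  exact ⟨(ENNReal.toReal_eq_one_iff _).1 h⟩

lemma lintegral_unitExpNoise_ne_top : ∫⁻ e, e ∂unitExpNoise ≠ ∞ := by
  have htail {t : ℝ} (ht : 0 ≤ t) :
      unitExpNoise {e | t ≤ e} = ENNReal.ofReal (exp (-1 * t)) := by
    rw [neg_one_mul, ← ofReal_measureReal]
    exact congrArg _ (unitExpNoise_real_Ici ⟨t, ht⟩)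
  have hlayer := lintegral_eq_lintegral_meas_le unitExpNoise
    (.of_forall fun e ↦ e.coe_nonneg) measurable_coe_nnreal_real.aemeasurable
  simp only [ENNReal.ofReal_coe_nnreal] at hlayer
  rw [hlayer, setLIntegral_congr_fun measurableSet_Ioi fun t ht ↦ htail (le_of_lt ht)]
  exact (exp_neg_integrableOn_Ioi 0 one_pos).lintegral_lt_top.ne

lemma eq_map_unitExpNoise {m : Measure ℝ} [IsProbabilityMeasure m] {H R : ℝ≥0 → ℝ≥0}
    (hHR : GaloisConnection H R) (hm : ∀ y : ℝ≥0, m.real (Ici (y : ℝ)) = exp (-H y)) :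
    m = unitExpNoise.map fun e ↦ (R e : ℝ) := by
  have hR : Measurable fun e ↦ (R e : ℝ) :=
    measurable_coe_nnreal_real.comp hHR.monotone_u.measurable
  have := Measure.isProbabilityMeasure_map (μ := unitExpNoise) hR.aemeasurable
  have hnonneg (y : ℝ≥0) :
      m (Ici (y : ℝ)) = unitExpNoise.map (fun e ↦ (R e : ℝ)) (Ici (y : ℝ)) := by
    rw [Measure.map_apply hR measurableSet_Ici, ← measureReal_eq_measureReal_iff, hm,
      ← unitExpNoise_real_Ici]
    congr 1 with e
    exact (hHR y e).trans NNReal.coe_le_coe.symm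
  have hH : H 0 = 0 := hHR.l_bot
  have hzero : m (Ici 0) = 1 := by
    simpa [measureReal_def, ENNReal.toReal_eq_one_iff, hH] using hm 0
  have hone {μ : Measure ℝ} [IsProbabilityMeasure μ] (hμ : μ (Ici 0) = 1) {y : ℝ} (hy : y ≤ 0) :
      μ (Ici y) = 1 :=
    one_le_prob_iff.1 (hμ.ge.trans (measure_mono (Ici_subset_Ici.2 hy)))
  refine Measure.ext_of_Ici _ _ fun y ↦ ?_
  rcases le_total 0 y with hy | hy
  · exact hnonneg ⟨y, hy⟩
  · rw [hone hzero hy, hone ((hnonneg 0).symm.trans hzero) hy]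

end ExponentialNoise

section LossTime

variable {c p : ℝ≥0}

/-- The cumulative hazard `∫ t in 0..y, (u + c t) ^ (p - 1)` of a loss before time `y`: the window
started at `u ^ (p - 1)` equals `(u + c t) ^ (p - 1)` at time `t`, and losses occur at a rate equal
to the window. -/
noncomputable def lossHazard (c p u y : ℝ≥0) : ℝ≥0 :=
  ((u + c * y) ^ (p : ℝ) - u ^ (p : ℝ)) / (c * p)

/-- The time at which the cumulative hazard `lossHazard c p u` reaches the level `e`. -/
noncomputable def lossTime (c p u e : ℝ≥0) : ℝ≥0 :=
  ((u ^ (p : ℝ) + c * p * e) ^ (p : ℝ)⁻¹ - u) / c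

lemma measurable_lossTime (u : ℝ≥0) : Measurable (lossTime c p u) := by
  unfold lossTime; fun_prop

lemma continuous_lossTime (e : ℝ≥0) : Continuous fun u ↦ lossTime c p u e := by
  have hpow : Continuous fun u : ℝ≥0 ↦ u ^ (p : ℝ) + c * p * e :=
    (NNReal.continuous_rpow_const p.coe_nonneg).add_const _
  exact (((NNReal.continuous_rpow_const (inv_nonneg.2 p.coe_nonneg)).comp hpow).sub
    continuous_id).div_const c

lemma gc_lossHazard_lossTime (hc : 0 < c) (hp : 0 < p) (u : ℝ≥0) :
    GaloisConnection (lossHazard c p u) (lossTime c p u) := by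
  intro y e
  have hp' : (0 : ℝ) < p := hp
  have hu : u ≤ (u ^ (p : ℝ) + c * p * e) ^ (p : ℝ)⁻¹ :=
    (NNReal.le_rpow_inv_iff hp').2 le_self_add
  rw [lossHazard, lossTime, div_le_iff₀' (mul_pos hc hp), tsub_le_iff_left, le_div_iff₀' hc,
    le_tsub_iff_left hu, NNReal.le_rpow_inv_iff hp']

lemma lossTime_le_lossTime_zero (hp : 1 ≤ p) (u e : ℝ≥0) : lossTime c p u e ≤ lossTime c p 0 e := by
  have hp' : (p : ℝ) ≠ 0 := NNReal.coe_ne_zero.2 (zero_lt_one.trans_le hp).ne'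
  have hsubadd : (u ^ (p : ℝ) + c * p * e) ^ (p : ℝ)⁻¹ ≤ u + (c * p * e) ^ (p : ℝ)⁻¹ := by
    simpa [NNReal.rpow_rpow_inv hp'] using NNReal.rpow_add_le_add_rpow (u ^ (p : ℝ)) (c * p * e)
      (inv_nonneg.2 p.coe_nonneg) (inv_le_one_of_one_le₀ hp)
  rw [lossTime, lossTime, NNReal.zero_rpow hp', zero_add, tsub_zero]
  gcongr
  exact tsub_le_iff_left.2 hsubadd

lemma lintegral_lossTime_zero_ne_top (hc : 0 < c) (hp : 1 ≤ p) :
    ∫⁻ e, lossTime c p 0 e ∂unitExpNoise ≠ ∞ := by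
  have hp' : (p : ℝ) ≠ 0 := NNReal.coe_ne_zero.2 (zero_lt_one.trans_le hp).ne'
  have hle (e : ℝ≥0) : lossTime c p 0 e ≤ (1 + c * p * e) / c := by
    rw [lossTime, NNReal.zero_rpow hp', zero_add, tsub_zero]
    gcongr
    calc (c * p * e) ^ (p : ℝ)⁻¹ ≤ (1 + c * p * e) ^ (p : ℝ)⁻¹ := by gcongr; exact le_add_self
      _ ≤ (1 + c * p * e) ^ (1 : ℝ) :=
          NNReal.rpow_le_rpow_of_exponent_le le_self_add (inv_le_one_of_one_le₀ hp)
      _ = 1 + c * p * e := NNReal.rpow_one _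
  have hmean := lintegral_unitExpNoise_ne_top
  refine ne_top_of_le_ne_top ?_ (lintegral_mono fun e ↦ ENNReal.coe_le_coe.2 (hle e))
  simp only [ENNReal.coe_div hc.ne', ENNReal.coe_add, ENNReal.coe_mul, ENNReal.div_eq_inv_mul]
  rw [lintegral_const_mul _ (by fun_prop), lintegral_add_left measurable_const,
    lintegral_const_mul _ (by fun_prop), lintegral_const, measure_univ]
  have : (c : ℝ≥0∞) ≠ 0 := by simpa using hc.ne'
  finiteness

end LossTime

section LossLaw

/-- The case `p = 5`, `u = x ^ (1 / 4)` is the exponent in the tail of the loss law. -/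
lemma lossHazard_five {c : ℝ≥0} (hc : c ≠ 0) (u y : ℝ≥0) :
    lossHazard c 5 u y = u ^ 4 * y + 2 * c * u ^ 3 * y ^ 2 + 2 * c ^ 2 * u ^ 2 * y ^ 3
      + c ^ 3 * u * y ^ 4 + c ^ 4 * y ^ 5 / 5 := by
  have hexpand : (u + c * y) ^ 5 = (u ^ 4 * y + 2 * c * u ^ 3 * y ^ 2 + 2 * c ^ 2 * u ^ 2 * y ^ 3
      + c ^ 3 * u * y ^ 4 + c ^ 4 * y ^ 5 / 5) * (c * 5) + u ^ 5 := by ring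
  rw [lossHazard, NNReal.coe_ofNat, NNReal.rpow_ofNat, NNReal.rpow_ofNat, hexpand,
    add_tsub_cancel_right, mul_div_cancel_right₀ _ (by positivity)]

lemma eq_map_lossTime_of_tail {α k : ℝ} (hk : k = 3 / 4) {c : ℝ≥0} (hc : 0 < c)
    (hcα : c = α * (1 - k)) {m : Measure ℝ} [IsProbabilityMeasure m] {x : ℝ≥0}
    (hm : ∀ y : ℝ, 0 ≤ y → (m (Ici y)).toReal
      = exp (-(x * y + 2 * α * (1 - k) * x ^ k * y ^ 2
          + 2 * α ^ 2 * (1 - k) ^ 2 * x ^ (2 * k - 1) * y ^ 3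
          + α ^ 3 * (1 - k) ^ 3 * x ^ (3 * k - 2) * y ^ 4
          + α ^ 4 * (1 - k) ^ 4 * x ^ (4 * k - 3) * y ^ 5 / 5))) :
    m = unitExpNoise.map fun e ↦ (lossTime c 5 (x ^ (1 - k)) e : ℝ) := by
  refine eq_map_unitExpNoise (gc_lossHazard_lossTime hc (by norm_num) _) fun y ↦ ?_
  obtain ⟨u, hu⟩ : ∃ u : ℝ≥0, u = x ^ (1 - k) := ⟨_, rfl⟩
  have hpow (s : ℝ) (n : ℕ) (hs : s = (1 - k) * n) : (x : ℝ) ^ s = (u : ℝ) ^ n := by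
    rw [hu, NNReal.coe_rpow, hs, rpow_mul x.coe_nonneg, rpow_natCast]
  have hx : (x : ℝ) = (u : ℝ) ^ 4 := by rw [← hpow 1 4 (by norm_num [hk]), rpow_one]
  rw [← hu, lossHazard_five hc.ne', measureReal_def, hm y y.coe_nonneg,
    hpow k 3 (by norm_num [hk]), hpow (2 * k - 1) 2 (by norm_num [hk]),
    hpow (3 * k - 2) 1 (by norm_num [hk]), hpow (4 * k - 3) 0 (by norm_num [hk]), hx]
  push_cast
  rw [hcα]
  ring_nf

end LossLaw

section CompoundKernel

variable {r : ℝ} {a c p δ : ℝ≥0}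

/-- The loss time as a function of the initial window `q.1` and the exponential noise `q.2`. -/
noncomputable def windowLossTime (c p : ℝ≥0) (r : ℝ) (q : ℝ≥0 × ℝ≥0) : ℝ≥0 :=
  lossTime c p (q.1 ^ r) q.2

/-- The transition kernel of the post-loss window chain on `ℝ≥0`, with `r = 1 - k`, `δ = 1 - β`,
`c = α (1 - k)` and `p = 1 / r + 1`. -/
noncomputable def compoundKernel (δ c p : ℝ≥0) (r : ℝ) : Kernel ℝ≥0 ℝ≥0 :=
  randomMapKernel unitExpNoise (windowStep δ c r (windowLossTime c p r))

/-- The transition kernel of the dominating affine recursion on `ℝ≥0`, whose noise is the loss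
time from an empty window. -/
noncomputable def affineKernel (a c p : ℝ≥0) : Kernel ℝ≥0 ℝ≥0 :=
  randomMapKernel unitExpNoise (affineStep a c (lossTime c p 0))

lemma measurable_windowLossTime : Measurable (windowLossTime c p r) := by
  unfold windowLossTime lossTime; fun_prop

lemma windowLossTime_le (hp : 1 ≤ p) (x e : ℝ≥0) :
    windowLossTime c p r (x, e) ≤ lossTime c p 0 e :=
  lossTime_le_lossTime_zero hp _ e

instance : IsMarkovKernel (compoundKernel δ c p r) :=
  isMarkovKernel_randomMapKernel (measurable_windowStep measurable_windowLossTime)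

instance : IsMarkovKernel (affineKernel a c p) :=
  isMarkovKernel_randomMapKernel (measurable_affineStep (measurable_lossTime 0))

lemma stochLE_iterate_compoundKernel (hr : r ≠ 0) (hp : 1 ≤ p) (x : ℝ≥0) (n : ℕ) :
    StochLE (((compoundKernel δ c p r ∘ₘ ·)^[n] (.dirac x)).map (· ^ r))
      ((affineKernel (δ ^ r) c p ∘ₘ ·)^[n] (.dirac (x ^ r))) :=
  stochLE_iterate_windowStep hr measurable_windowLossTime (measurable_lossTime 0)
    (windowLossTime_le hp) x n

lemma exists_iterate_compoundKernel_Ioi_le (hr : 0 < r) (hδ : δ < 1) (hc : 0 < c) (hp : 1 ≤ p)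
    (x : ℝ≥0) {ε : ℝ≥0∞} (hε : ε ≠ 0) :
    ∃ M : ℝ≥0, ∀ n, ((compoundKernel δ c p r ∘ₘ ·)^[n] (.dirac x)) (Ioi M) ≤ ε :=
  exists_iterate_windowStep_Ioi_le hr hδ measurable_windowLossTime (measurable_lossTime 0)
    (windowLossTime_le hp) (lintegral_lossTime_zero_ne_top hc hp) x hε

theorem exists_invariant_compoundKernel (hr : 0 < r) (hδ : δ < 1) (hc : 0 < c) (hp : 1 ≤ p) :
    ∃ ρ : Measure ℝ≥0, IsProbabilityMeasure ρ ∧ (compoundKernel δ c p r).Invariant ρ :=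
  exists_invariant_windowStep hr hδ measurable_windowLossTime
    (fun e ↦ (continuous_lossTime e).comp (NNReal.continuous_rpow_const hr.le))
    (measurable_lossTime 0) (windowLossTime_le hp) (lintegral_lossTime_zero_ne_top hc hp)

lemma map_coe_compoundKernel (x : ℝ≥0) :
    (compoundKernel δ c p r x).map (↑)
      = (unitExpNoise.map fun e ↦ (lossTime c p (x ^ r) e : ℝ)).map
          fun g ↦ (δ : ℝ) * ((x : ℝ) ^ r + c * g) ^ (1 / r) := by
  have hmeas : Measurable (windowStep δ c r (windowLossTime c p r)) :=
    measurable_windowStep measurable_windowLossTime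
  have hτ := measurable_lossTime (c := c) (p := p) (x ^ r)
  rw [compoundKernel, randomMapKernel_apply hmeas, Measure.map_map (by fun_prop) (by fun_prop),
    Measure.map_map (by fun_prop) (by fun_prop)]
  congr 1 with e
  simp [windowStep, windowLossTime]

lemma map_coe_affineKernel (x : ℝ≥0) :
    (affineKernel a c p x).map (↑)
      = (unitExpNoise.map fun e ↦ (lossTime c p 0 e : ℝ)).map fun g ↦ (a : ℝ) * (x + c * g) := by
  have hη := measurable_lossTime (c := c) (p := p) 0
  have hmeas : Measurable (affineStep a c (lossTime c p 0)) := measurable_affineStep hη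
  rw [affineKernel, randomMapKernel_apply hmeas, Measure.map_map (by fun_prop) (by fun_prop),
    Measure.map_map (by fun_prop) (by fun_prop)]
  rfl

end CompoundKernel

section RealTails

lemma StochLE.toReal_map_coe_rpow_le {r : ℝ} {μ ρ : Measure ℝ≥0} [IsFiniteMeasure ρ]
    (h : StochLE (μ.map (· ^ r)) ρ) (y : ℝ) :
    ((μ.map (↑)) {v : ℝ | y < v ^ r}).toReal ≤ ((ρ.map (↑)) (Ioi y)).toReal := by
  have hupper : IsUpperSet {z : ℝ≥0 | y < z} := fun _ _ hzw hz ↦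
    lt_of_lt_of_le hz (NNReal.coe_le_coe.2 hzw)
  have hmeas : MeasurableSet {z : ℝ≥0 | y < z} := measurableSet_lt (by fun_prop) (by fun_prop)
  have hle := h _ hmeas hupper
  rw [Measure.map_apply (by fun_prop) hmeas] at hle
  rw [Measure.map_apply (by fun_prop) (measurableSet_lt (by fun_prop) (by fun_prop)),
    Measure.map_apply (by fun_prop) measurableSet_Ioi]
  exact ENNReal.toReal_mono (measure_ne_top _ _) hle

lemma one_div_mul_sum_Icc_le {f : ℕ → ℝ} {ε : ℝ} (hf : ∀ i, f i ≤ ε) {n : ℕ} (hn : 1 ≤ n) :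
    1 / (n : ℝ) * ∑ i ∈ Finset.Icc 1 n, f i ≤ ε := by
  have hsum : ∑ i ∈ Finset.Icc 1 n, f i ≤ n * ε := by
    simpa using Finset.sum_le_card_nsmul (Finset.Icc 1 n) f ε fun i _ ↦ hf i
  rwa [one_div_mul_eq_div, div_le_iff₀' (by positivity)]

lemma exists_one_div_mul_sum_map_coe_Ioi_le {μ : ℕ → Measure ℝ≥0}
    (hμ : ∀ ε : ℝ≥0∞, ε ≠ 0 → ∃ M, ∀ n, μ n (Ioi M) ≤ ε) {ε : ℝ} (hε : 0 < ε) :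
    ∃ M : ℝ, ∀ n : ℕ, 1 ≤ n →
      1 / (n : ℝ) * ∑ i ∈ Finset.Icc 1 n, (((μ i).map (↑)) (Ioi M)).toReal ≤ ε := by
  obtain ⟨M, hM⟩ := hμ _ (ENNReal.ofReal_pos.2 hε).ne'
  refine ⟨M, fun n ↦ one_div_mul_sum_Icc_le fun i ↦ ENNReal.toReal_le_of_le_ofReal hε.le ?_⟩
  rw [Measure.map_apply (by fun_prop) measurableSet_Ioi]
  exact hM i

end RealTails

/-- The limiting post-loss window chain V̄ of TCP Compound: V̄_n^{1-k} is
stochastically dominated by the contractive affine chain X_n driven by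
i.i.d. copies of Ḡ_0; hence the Cesàro averages of the laws of V̄_n are
tight and V̄ admits an invariant probability distribution. -/
theorem tcp_compound_limit_chain_invariant_distribution
    (α β k : ℝ) (hk : k = 3 / 4) (hα : 0 < α) (hβ0 : 0 < β) (hβ1 : β < 1)
    (ν : ℝ → Measure ℝ) (hνprob : ∀ x, IsProbabilityMeasure (ν x))
    (hccdf : ∀ x : ℝ, 0 ≤ x → ∀ y : ℝ, 0 ≤ y →
      ((ν x) (Ici y)).toReal
        = Real.exp (-(x * y + 2 * α * (1 - k) * x ^ k * y ^ 2
            + 2 * α ^ 2 * (1 - k) ^ 2 * x ^ (2 * k - 1) * y ^ 3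
            + α ^ 3 * (1 - k) ^ 3 * x ^ (3 * k - 2) * y ^ 4
            + α ^ 4 * (1 - k) ^ 4 * x ^ (4 * k - 3) * y ^ 5 / 5)))
    (κV κX : ℝ → Measure ℝ)
    (hκV : ∀ x : ℝ, κV x
      = (ν x).map (fun g => (1 - β) * (x ^ (1 - k) + α * (1 - k) * g) ^ (1 / (1 - k))))
    (hκX : ∀ x : ℝ, κX x
      = (ν 0).map (fun g => (1 - β) ^ (1 - k) * (x + α * (1 - k) * g)))
    (μV μX : ℝ → ℕ → Measure ℝ)
    (hV0 : ∀ x, μV x 0 = Measure.dirac x) (hVS : ∀ x n, μV x (n + 1) = (μV x n).bind κV)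
    (hX0 : ∀ x, μX x 0 = Measure.dirac x) (hXS : ∀ x n, μX x (n + 1) = (μX x n).bind κX) :
    (∀ x : ℝ, 0 ≤ x → ∀ n : ℕ, ∀ y : ℝ,
      ((μV x n) {v : ℝ | y < v ^ (1 - k)}).toReal
        ≤ ((μX (x ^ (1 - k)) n) (Ioi y)).toReal) ∧
    (∀ x : ℝ, 0 ≤ x → ∀ ε : ℝ, 0 < ε → ∃ K : ℝ, ∀ n : ℕ, 1 ≤ n →
      (1 / (n : ℝ)) * ∑ i ∈ Finset.Icc 1 n, ((μV x i) (Ioi K)).toReal ≤ ε) ∧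
    (∃ pi0 : Measure ℝ, IsProbabilityMeasure pi0 ∧ pi0.bind κV = pi0) := by
  have hr : 0 < 1 - k := by linarith
  lift 1 - β to ℝ≥0 using sub_nonneg.2 hβ1.le with δ hδ
  lift α * (1 - k) to ℝ≥0 using (by positivity) with c hc
  have hc₀ : 0 < c := NNReal.coe_pos.1 (hc ▸ mul_pos hα hr)
  have hδ₁ : δ < 1 := NNReal.coe_lt_one.1 (hδ ▸ sub_lt_self 1 hβ0)
  have hp : (1 : ℝ≥0) ≤ 5 := by norm_num
  have hν (x : ℝ≥0) := eq_map_lossTime_of_tail hk hc₀ hc (m := ν x) (hccdf x x.coe_nonneg)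
  have hκV' (x : ℝ≥0) : κV x = (compoundKernel δ c 5 (1 - k) x).map (↑) := by
    rw [hκV, hν, map_coe_compoundKernel]
  have hκX' (x : ℝ≥0) : κX x = (affineKernel (δ ^ (1 - k)) c 5 x).map (↑) := by
    rw [hκX, ← NNReal.coe_zero, hν, NNReal.zero_rpow hr.ne', map_coe_affineKernel, NNReal.coe_rpow]
  have hcoe := measurableEmbedding_coe_nnreal_real
  have hμV (x : ℝ≥0) := eq_map_iterate_comp_dirac hcoe hκV' (hV0 x) (hVS x)
  have hμX (x : ℝ≥0) := eq_map_iterate_comp_dirac hcoe hκX' (hX0 x) (hXS x)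
  refine ⟨fun x hx n y ↦ ?_, fun x hx ε hε ↦ ?_, ?_⟩
  · lift x to ℝ≥0 using hx
    rw [hμV, ← NNReal.coe_rpow, hμX]
    have := isProbabilityMeasure_iterate_comp (K := affineKernel (δ ^ (1 - k)) c 5)
    exact (stochLE_iterate_compoundKernel hr.ne' hp x n).toReal_map_coe_rpow_le y
  · lift x to ℝ≥0 using hx
    simp only [hμV]
    exact exists_one_div_mul_sum_map_coe_Ioi_le
      (fun _ ↦ exists_iterate_compoundKernel_Ioi_le hr hδ₁ hc₀ hp x) hε
  · obtain ⟨ρ, hρ, hinv⟩ := exists_invariant_compoundKernel hr hδ₁ hc₀ hp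
    have hfix := map_bind_eq_self hcoe hκV' hinv
    exact ⟨_, Measure.isProbabilityMeasure_map hcoe.measurable.aemeasurable, hfix⟩
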